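/- Let α_1, α_2 > 0 with α_1 + α_2 = n, let A_1, A_2 be invertible n×n integer matrices with A_1 − A_2 invertible, set d = min{|A_1 x − A_2 x| : |x| = 1} and D = max{‖A_1‖, ‖A_2‖}. For every 1 ≤ p < ∞ there is a constant C > 0 such that for all b ∈ ℓ^p(ℤ^n) and all j_0 ∈ ℤ^n \ {0}, letting I_4 = {i ∈ ℤ^n : |i| ≥ 2√n D |j_0|} ∩ I_1^c ∩ I_2^c (where I_1 = {i : 0 < |i − A_1 j_0| ≤ (d/2)|j_0|} and I_2 = {i : 0 < |i − A_2 j_0| ≤ (d/2)|j_0|}), one has Σ_{i ∈ I_4} |b(i)| / (|i − A_1 j_0|^{α_1} |i − A_2 j_0|^{α_2}) ≤ C ‖b‖_{ℓ^p(ℤ^n)} |j_0|^{-n/p}. -/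

import Mathlib

open scoped ENNReal BigOperators Classical

noncomputable def eucZ {n : ℕ} (v : Fin n → ℤ) : ℝ :=
  Real.sqrt (∑ k, ((v k : ℝ)) ^ 2)

noncomputable def eucR {n : ℕ} (v : Fin n → ℝ) : ℝ :=
  Real.sqrt (∑ k, (v k) ^ 2)

noncomputable def lpNorm {n : ℕ} (p : ℝ) (b : (Fin n → ℤ) → ℝ) : ℝ≥0∞ :=
  (∑' i : Fin n → ℤ, ENNReal.ofReal |b i| ^ p) ^ (1 / p)

noncomputable def Tfs {n m : ℕ} (al : Fin m → ℝ) (A : Fin m → Matrix (Fin n) (Fin n) ℤ)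
    (b : (Fin n → ℤ) → ℝ) (j : Fin n → ℤ) : ℝ≥0∞ :=
  ∑' i : Fin n → ℤ,
    if ∀ k, i ≠ (A k).mulVec j then
      ENNReal.ofReal (|b i| / ∏ k, eucZ (i - (A k).mulVec j) ^ (al k))
    else 0

noncomputable def Mfr {n : ℕ} (γ : ℝ) (b : (Fin n → ℤ) → ℝ) (j : Fin n → ℤ) : ℝ≥0∞ :=
  ⨆ N : ℕ, ENNReal.ofReal ((2 * (N : ℝ) + 1) ^ (γ - (n : ℝ)) *
    ∑ i ∈ Finset.Icc (fun k => j k - (N : ℤ)) (fun k => j k + (N : ℤ)), |b i|)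

noncomputable def Iop {n : ℕ} (α : ℝ) (b : (Fin n → ℤ) → ℝ) (j : Fin n → ℤ) : ℝ≥0∞ :=
  ∑' i : Fin n → ℤ, if i ≠ j then ENNReal.ofReal (|b i| / eucZ (i - j) ^ ((n : ℝ) - α)) else 0

def IsPAtom {n : ℕ} (p : ℝ) (d : ℕ) (a : (Fin n → ℤ) → ℝ) (i0 : Fin n → ℤ) (N : ℕ) : Prop :=
  (∀ i : Fin n → ℤ, a i ≠ 0 → ∀ t, |i t - i0 t| ≤ (N : ℤ)) ∧
  (∀ i : Fin n → ℤ, |a i| ≤ ((2 * (N : ℝ) + 1) ^ n) ^ (-(1 / p))) ∧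
  (∀ β : Fin n → ℕ, (∑ t, β t) ≤ d →
    ∑ i ∈ Finset.Icc (fun t => i0 t - (N : ℤ)) (fun t => i0 t + (N : ℤ)),
      (∏ t, ((i t : ℝ)) ^ (β t)) * a i = 0)

lemma eucR_eq {n : ℕ} (v : Fin n → ℝ) : eucR v = ‖(WithLp.toLp 2 v : EuclideanSpace ℝ (Fin n))‖ := by
  rw [EuclideanSpace.norm_eq]; simp [eucR]

lemma eucZ_eq {n : ℕ} (v : Fin n → ℤ) : eucZ v = eucR (fun k => (v k : ℝ)) := rfl

lemma eucR_smul {n : ℕ} (c : ℝ) (v : Fin n → ℝ) : eucR (c • v) = |c| * eucR v := by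
  rw [eucR_eq, eucR_eq, WithLp.toLp_smul, norm_smul, Real.norm_eq_abs]

lemma eucR_tri {n : ℕ} (v w : Fin n → ℝ) : eucR v ≤ eucR (v - w) + eucR w := by
  rw [eucR_eq, eucR_eq, eucR_eq, WithLp.toLp_sub]
  have := norm_add_le (WithLp.toLp 2 v - WithLp.toLp 2 w : EuclideanSpace ℝ (Fin n)) (WithLp.toLp 2 w)
  simpa using this

lemma eucZ_tri {n : ℕ} (v w : Fin n → ℤ) : eucZ v ≤ eucZ (v - w) + eucZ w := by
  rw [eucZ_eq, eucZ_eq, eucZ_eq]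
  convert eucR_tri (fun k => (v k : ℝ)) (fun k => (w k : ℝ)) using 3
  ext k; simp

lemma abs_le_eucZ {n : ℕ} (v : Fin n → ℤ) (k : Fin n) : |(v k : ℝ)| ≤ eucZ v := by
  rw [eucZ]
  apply Real.abs_le_sqrt
  exact Finset.single_le_sum (f := fun k => (v k : ℝ) ^ 2) (fun i _ => sq_nonneg _) (Finset.mem_univ k)

lemma one_le_eucZ {n : ℕ} (v : Fin n → ℤ) (hv : v ≠ 0) : 1 ≤ eucZ v := by
  obtain ⟨k, hk⟩ := Function.ne_iff.mp hv
  refine le_trans ?_ (abs_le_eucZ v k)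
  have : 1 ≤ |v k| := Int.one_le_abs hk
  exact_mod_cast this

lemma eucZ_nonneg {n : ℕ} (v : Fin n → ℤ) : 0 ≤ eucZ v := Real.sqrt_nonneg _

lemma eucZ_mulVec_le {n : ℕ} (A : Matrix (Fin n) (Fin n) ℤ) (D : ℝ)
    (h : ∀ x : Fin n → ℝ, eucR x = 1 → eucR ((A.map (Int.cast : ℤ → ℝ)).mulVec x) ≤ D)
    (j : Fin n → ℤ) (hj : j ≠ 0) : eucZ (A.mulVec j) ≤ D * eucZ j := by
  have h1 := one_le_eucZ j hj
  have hpos : 0 < eucZ j := by linarith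
  have := h ((eucZ j)⁻¹ • (fun k => (j k : ℝ))) (by
    rw [eucR_smul, ← eucZ_eq, abs_of_pos (by positivity), inv_mul_cancel₀ hpos.ne'])
  rw [Matrix.mulVec_smul, eucR_smul, abs_of_pos (by positivity), inv_mul_le_iff₀ hpos] at this
  rw [mul_comm]
  refine le_of_eq_of_le ?_ this
  rw [eucZ_eq]
  congr 1
  ext k
  simp [Matrix.mulVec, dotProduct]

lemma lemA (n : ℕ) (s : ℝ) (hs : (n : ℝ) < s) :
    Summable (fun m : Fin n → ℤ => (1 + ‖m‖) ^ (-s)) := by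
  let L : Submodule ℤ (Fin n → ℝ) := Submodule.span ℤ (Set.range (Pi.basisFun ℝ (Fin n)))
  have hrank : Module.finrank ℤ L = n := by
    rw [ZLattice.rank ℝ L]; simp
  have hsum := ZLattice.summable_norm_rpow L (-s) (by rw [hrank]; linarith)
  have hmem : ∀ m : Fin n → ℤ, (fun k => (m k : ℝ)) ∈ L := by
    intro m
    have : (fun k => (m k : ℝ)) = ∑ k, m k • (Pi.basisFun ℝ (Fin n) k) := by
      ext k
      simp [Finset.sum_apply, Pi.single_apply]
    rw [this]
    exact Submodule.sum_mem _ fun k _ => Submodule.smul_mem _ _ (Submodule.subset_span ⟨k, rfl⟩)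
  have hinj : Function.Injective (fun m : Fin n → ℤ => (⟨_, hmem m⟩ : L)) := by
    intro a b hab
    ext k
    have := congrFun (congrArg Subtype.val hab) k
    simpa using this
  have h2 := hsum.comp_injective hinj
  have hn : ∀ m : Fin n → ℤ, ‖(⟨_, hmem m⟩ : L)‖ = ‖m‖ := by
    intro m
    change ‖(fun k => (m k : ℝ))‖ = ‖m‖
    simp only [Pi.norm_def]
    rfl
  refine Summable.of_norm_bounded_eventually h2 ?_
  rw [Filter.eventually_cofinite]
  refine (Set.finite_singleton (0 : Fin n → ℤ)).subset ?_
  intro m hm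
  by_contra h0
  apply hm
  have h0' : m ≠ 0 := h0
  have : 0 < ‖m‖ := norm_pos_iff.mpr h0'
  simp only [Function.comp, hn]
  rw [Real.norm_of_nonneg (by positivity)]
  have hs0 : 0 ≤ s := le_trans (Nat.cast_nonneg n) hs.le
  exact Real.rpow_le_rpow_of_nonpos this (by linarith) (by linarith)

lemma lemB (n : ℕ) (s : ℝ) (hs : (n : ℝ) < s) :
    ∃ K : ℝ, 0 < K ∧ ∀ R : ℝ, 1 ≤ R →
      (∑' i : Fin n → ℤ, if R ≤ eucZ i then ENNReal.ofReal (eucZ i ^ (-s)) else 0)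
        ≤ ENNReal.ofReal (K * R ^ ((n : ℝ) - s)) := by
  have hS := lemA n s hs
  set S : ℝ := ∑' m : Fin n → ℤ, (1 + ‖m‖) ^ (-s) with hSdef
  have hs0 : 0 ≤ s := le_trans (Nat.cast_nonneg n) hs.le
  have hS0 : 0 ≤ S := tsum_nonneg fun m => by positivity
  refine ⟨3 ^ s * (2 : ℝ) ^ (s - n) * (S + 1), by positivity, fun R hR => ?_⟩
  set N := ⌊R⌋₊ with hN
  have hN1 : 1 ≤ N := Nat.le_floor (by simpa using hR)
  have : NeZero N := ⟨by omega⟩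
  have hNR : (N : ℝ) ≤ R := Nat.floor_le (by linarith)
  have hNR' : R / 2 ≤ N := by
    have h1 := Nat.lt_floor_add_one R
    have h2 : (1 : ℝ) ≤ N := by exact_mod_cast hN1
    rw [← hN] at h1
    linarith
  have hNpos : (0 : ℝ) < N := by exact_mod_cast hN1
  let e : (Fin n → ℤ) ≃ (Fin n → ℤ) × (Fin n → Fin N) :=
    (Equiv.piCongrRight fun _ => Int.divModEquiv N).trans
      (Equiv.arrowProdEquivProdArrow (Fin n) (fun _ => ℤ) (fun _ => Fin N))
  have key : ∀ i : Fin n → ℤ, (if R ≤ eucZ i then ENNReal.ofReal (eucZ i ^ (-s)) else 0)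
      ≤ ENNReal.ofReal ((N / 3 : ℝ) ^ (-s) * (1 + ‖(e i).1‖) ^ (-s)) := by
    intro i
    split_ifs with hi
    swap
    · exact zero_le
    apply ENNReal.ofReal_le_ofReal
    rw [← Real.mul_rpow (by positivity) (by positivity)]
    apply Real.rpow_le_rpow_of_nonpos (by positivity) _ (by linarith)
    have hm : N * ‖(e i).1‖ ≤ 2 * eucZ i := by
      rw [← le_div_iff₀' hNpos]
      have : 0 ≤ eucZ i := eucZ_nonneg i
      rw [pi_norm_le_iff_of_nonneg (by positivity)]
      intro k
      rw [le_div_iff₀' hNpos]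
      have hk : (e i).1 k = i k / (N : ℤ) := rfl
      rw [hk, Int.norm_eq_abs]
      have h1 := abs_le_eucZ i k
      have h2 : (i k / (N : ℤ)) * N + i k % (N : ℤ) = i k := Int.ediv_mul_add_emod _ _
      have h3 : 0 ≤ i k % (N : ℤ) := Int.emod_nonneg _ (by omega)
      have h4 : i k % (N : ℤ) < N := Int.emod_lt_of_pos _ (by omega)
      have h2' : ((i k / (N : ℤ) : ℤ) : ℝ) * N + ((i k % (N : ℤ) : ℤ) : ℝ) = i k := by
        exact_mod_cast h2
      have h3' : (0 : ℝ) ≤ ((i k % (N : ℤ) : ℤ) : ℝ) := by exact_mod_cast h3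
      have h4' : ((i k % (N : ℤ) : ℤ) : ℝ) < N := by exact_mod_cast h4
      have h5 : (N : ℝ) * |((i k / (N : ℤ) : ℤ) : ℝ)| = |((i k / (N : ℤ) : ℤ) : ℝ) * N| := by
        rw [abs_mul, abs_of_pos hNpos, mul_comm]
      rw [h5]
      rw [abs_le] at h1 ⊢
      constructor <;> linarith
    nlinarith
  have hN3 : (N / 3 : ℝ) ^ (-s) = 3 ^ s * (N : ℝ) ^ (-s) := by
    rw [Real.div_rpow (by positivity) (by positivity), Real.rpow_neg (by norm_num : (0 : ℝ) ≤ 3)]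
    field_simp
  calc _ ≤ ∑' i : Fin n → ℤ, ENNReal.ofReal ((N / 3 : ℝ) ^ (-s) * (1 + ‖(e i).1‖) ^ (-s)) :=
        ENNReal.tsum_le_tsum key
    _ = ∑' x : (Fin n → ℤ) × (Fin n → Fin N),
          ENNReal.ofReal ((N / 3 : ℝ) ^ (-s) * (1 + ‖x.1‖) ^ (-s)) :=
        e.tsum_eq (fun x => ENNReal.ofReal ((N / 3 : ℝ) ^ (-s) * (1 + ‖x.1‖) ^ (-s)))
    _ = ∑' m : Fin n → ℤ, ENNReal.ofReal ((N : ℝ) ^ n * (N / 3 : ℝ) ^ (-s) * (1 + ‖m‖) ^ (-s)) := by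
        rw [ENNReal.tsum_prod']
        congr 1
        ext m
        rw [tsum_fintype]
        simp only [Finset.sum_const, Finset.card_univ, Fintype.card_pi, Fintype.card_fin,
          Finset.prod_const, nsmul_eq_mul]
        rw [mul_assoc, ENNReal.ofReal_mul (p := (N : ℝ) ^ n) (by positivity)]
        congr 1
        rw [ENNReal.ofReal_pow (by positivity)]
        simp
    _ = ENNReal.ofReal ((N : ℝ) ^ n * (N / 3 : ℝ) ^ (-s) * S) := by
        rw [hSdef, ← tsum_mul_left, ENNReal.ofReal_tsum_of_nonneg]
        · intro m; positivity
        · exact hS.mul_left _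
    _ ≤ _ := by
        apply ENNReal.ofReal_le_ofReal
        have h1 : (N : ℝ) ^ n * (N : ℝ) ^ (-s) = (N : ℝ) ^ ((n : ℝ) - s) := by
          rw [sub_eq_add_neg, Real.rpow_add hNpos, Real.rpow_natCast]
        have h2 : (N : ℝ) ^ ((n : ℝ) - s) ≤ (R / 2) ^ ((n : ℝ) - s) :=
          Real.rpow_le_rpow_of_nonpos (by positivity) hNR' (by linarith)
        have h3 : (R / 2) ^ ((n : ℝ) - s) = 2 ^ (s - n) * R ^ ((n : ℝ) - s) := by
          rw [Real.div_rpow (by positivity) (by positivity), ← neg_sub s n,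
            Real.rpow_neg (by norm_num : (0 : ℝ) ≤ 2)]
          field_simp
        rw [hN3]
        calc (N : ℝ) ^ n * (3 ^ s * (N : ℝ) ^ (-s)) * S
            = 3 ^ s * S * ((N : ℝ) ^ n * (N : ℝ) ^ (-s)) := by ring
          _ ≤ 3 ^ s * (S + 1) * (2 ^ (s - n) * R ^ ((n : ℝ) - s)) := by
            rw [h1, ← h3]; gcongr; linarith
          _ = _ := by ring

lemma lemC (n : ℕ) (hn : 1 ≤ n) (p : ℝ) (hp : 1 ≤ p) :
    ∃ K : ℝ, 0 < K ∧ ∀ (b : (Fin n → ℤ) → ℝ) (R : ℝ), 1 ≤ R →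
      (∑' i : Fin n → ℤ, ENNReal.ofReal |b i| *
        (if R ≤ eucZ i then ENNReal.ofReal (eucZ i ^ (-(n : ℝ))) else 0))
        ≤ ENNReal.ofReal K * lpNorm p b * ENNReal.ofReal (R ^ (-((n : ℝ) / p))) := by
  have hn' : (1 : ℝ) ≤ n := by exact_mod_cast hn
  rcases hp.eq_or_lt with rfl | hp1
  · refine ⟨1, one_pos, fun b R hR => ?_⟩
    simp only [lpNorm, ENNReal.rpow_one, div_one, ENNReal.ofReal_one, one_mul]
    rw [← ENNReal.tsum_mul_right]
    apply ENNReal.tsum_le_tsum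
    intro i
    gcongr
    split_ifs with hi
    · apply ENNReal.ofReal_le_ofReal
      exact Real.rpow_le_rpow_of_nonpos (by linarith) hi (by linarith)
    · exact zero_le
  · set q := Real.conjExponent p with hq
    have hpq : p.HolderConjugate q := Real.HolderConjugate.conjExponent hp1
    have hq1 : 1 < q := hpq.symm.lt
    have hq0 : 0 < q := by linarith
    obtain ⟨K, hK, hB⟩ := lemB n (n * q) (by nlinarith)
    refine ⟨K ^ (1 / q), by positivity, fun b R hR => ?_⟩
    have hR0 : 0 < R := by linarith
    set w : (Fin n → ℤ) → ℝ≥0∞ := fun i =>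
      if R ≤ eucZ i then ENNReal.ofReal (eucZ i ^ (-(n : ℝ))) else 0 with hw
    have H := ENNReal.lintegral_mul_le_Lp_mul_Lq (MeasureTheory.Measure.count : MeasureTheory.Measure (Fin n → ℤ)) hpq
      (f := fun i => ENNReal.ofReal |b i|) (g := w)
      (measurable_of_countable _).aemeasurable (measurable_of_countable _).aemeasurable
    simp only [MeasureTheory.lintegral_count, Pi.mul_apply] at H
    refine H.trans ?_
    have hwq : ∑' i, w i ^ q ≤ ENNReal.ofReal (K * R ^ ((n : ℝ) - n * q)) := by
      refine le_trans (le_of_eq ?_) (hB R hR)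
      congr 1
      ext i
      simp only [hw]
      split_ifs with hi
      · rw [ENNReal.ofReal_rpow_of_nonneg (Real.rpow_nonneg (eucZ_nonneg i) _) hq0.le,
          ← Real.rpow_mul (eucZ_nonneg i), neg_mul]
      · rw [ENNReal.zero_rpow_of_pos hq0]
    have h2 : (∑' i, w i ^ q) ^ (1 / q) ≤
        ENNReal.ofReal (K ^ (1 / q)) * ENNReal.ofReal (R ^ (-((n : ℝ) / p))) := by
      refine (ENNReal.rpow_le_rpow hwq (by positivity)).trans (le_of_eq ?_)
      rw [ENNReal.ofReal_rpow_of_nonneg (by positivity) (by positivity),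
        Real.mul_rpow (by positivity) (by positivity), ENNReal.ofReal_mul (by positivity),
        ← Real.rpow_mul hR0.le]
      congr 3
      have h3 := hpq.inv_add_inv_eq_one
      have h4 : p⁻¹ = 1 - q⁻¹ := by linarith
      rw [div_eq_mul_inv (n : ℝ) p, h4]
      field_simp
      ring
    calc _ ≤ lpNorm p b * (ENNReal.ofReal (K ^ (1 / q)) * ENNReal.ofReal (R ^ (-((n : ℝ) / p)))) := by
          rw [lpNorm]; gcongr
      _ = _ := by ring

theorem stmt6 (n : ℕ) (hn : 1 ≤ n) (α1 α2 : ℝ) (h1 : 0 < α1) (h2 : 0 < α2)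
    (hsum : α1 + α2 = n)
    (A1 A2 : Matrix (Fin n) (Fin n) ℤ) (hA1 : A1.det ≠ 0) (hA2 : A2.det ≠ 0)
    (hA12 : (A1 - A2).det ≠ 0)
    (d D : ℝ)
    (hd : IsLeast {r : ℝ | ∃ x : Fin n → ℝ, eucR x = 1 ∧
        r = eucR ((A1.map (Int.cast : ℤ → ℝ)).mulVec x - (A2.map (Int.cast : ℤ → ℝ)).mulVec x)} d)
    (hD : IsGreatest {r : ℝ | ∃ x : Fin n → ℝ, eucR x = 1 ∧
        (r = eucR ((A1.map (Int.cast : ℤ → ℝ)).mulVec x) ∨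
         r = eucR ((A2.map (Int.cast : ℤ → ℝ)).mulVec x))} D)
    (p : ℝ) (hp : 1 ≤ p) :
    ∃ C : ℝ, 0 < C ∧ ∀ (b : (Fin n → ℤ) → ℝ) (j0 : Fin n → ℤ), j0 ≠ 0 →
      (∑' i : Fin n → ℤ,
          if 2 * Real.sqrt n * D * eucZ j0 ≤ eucZ i ∧
              ¬(0 < eucZ (i - A1.mulVec j0) ∧ eucZ (i - A1.mulVec j0) ≤ d / 2 * eucZ j0) ∧
              ¬(0 < eucZ (i - A2.mulVec j0) ∧ eucZ (i - A2.mulVec j0) ≤ d / 2 * eucZ j0) then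
            ENNReal.ofReal
              (|b i| / (eucZ (i - A1.mulVec j0) ^ α1 * eucZ (i - A2.mulVec j0) ^ α2))
          else 0)
        ≤ ENNReal.ofReal C * lpNorm p b * ENNReal.ofReal (eucZ j0 ^ (-((n : ℝ) / p))) := by
  have hub := hD.2
  have hm1 : ∀ j : Fin n → ℤ, j ≠ 0 → eucZ (A1.mulVec j) ≤ D * eucZ j :=
    eucZ_mulVec_le A1 D fun x hx => hub ⟨x, hx, Or.inl rfl⟩
  have hm2 : ∀ j : Fin n → ℤ, j ≠ 0 → eucZ (A2.mulVec j) ≤ D * eucZ j :=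
    eucZ_mulVec_le A2 D fun x hx => hub ⟨x, hx, Or.inr rfl⟩
  have hn' : (1 : ℝ) ≤ n := by exact_mod_cast hn
  have hsq : 1 ≤ Real.sqrt n := Real.one_le_sqrt.mpr hn'
  have hD1 : 1 ≤ D := by
    have hj : (Pi.single (⟨0, hn⟩ : Fin n) (1 : ℤ) : Fin n → ℤ) ≠ 0 := by simp
    have h3 := hm1 _ hj
    have h4 := one_le_eucZ (A1.mulVec (Pi.single (⟨0, hn⟩ : Fin n) (1 : ℤ)))
      (fun h => hj (Matrix.eq_zero_of_mulVec_eq_zero hA1 h))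
    have h5 : eucZ (Pi.single (⟨0, hn⟩ : Fin n) (1 : ℤ)) = 1 := by
      simp [eucZ, Pi.single_apply]
    rw [h5] at h3
    linarith
  obtain ⟨K, hK, hC⟩ := lemC n hn p hp
  refine ⟨2 ^ (n : ℝ) * K, by positivity, fun b j0 hj0 => ?_⟩
  have hj1 := one_le_eucZ j0 hj0
  have hterm : ∀ i : Fin n → ℤ, (if 2 * Real.sqrt n * D * eucZ j0 ≤ eucZ i ∧
              ¬(0 < eucZ (i - A1.mulVec j0) ∧ eucZ (i - A1.mulVec j0) ≤ d / 2 * eucZ j0) ∧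
              ¬(0 < eucZ (i - A2.mulVec j0) ∧ eucZ (i - A2.mulVec j0) ≤ d / 2 * eucZ j0) then
            ENNReal.ofReal
              (|b i| / (eucZ (i - A1.mulVec j0) ^ α1 * eucZ (i - A2.mulVec j0) ^ α2))
          else 0) ≤ ENNReal.ofReal (2 ^ (n : ℝ)) * (ENNReal.ofReal |b i| *
        (if eucZ j0 ≤ eucZ i then ENNReal.ofReal (eucZ i ^ (-(n : ℝ))) else 0)) := by
    intro i
    split_ifs with hc hi hi
    · have hDj : 2 * (D * eucZ j0) ≤ eucZ i := by
        refine le_trans ?_ hc.1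
        have : 0 ≤ D * eucZ j0 := by positivity
        nlinarith
      have hi0 : 0 < eucZ i := by linarith
      have t1 := eucZ_tri i (A1.mulVec j0)
      have t2 := eucZ_tri i (A2.mulVec j0)
      have u1 := hm1 j0 hj0
      have u2 := hm2 j0 hj0
      have v1 : eucZ i / 2 ≤ eucZ (i - A1.mulVec j0) := by linarith
      have v2 : eucZ i / 2 ≤ eucZ (i - A2.mulVec j0) := by linarith
      rw [← ENNReal.ofReal_mul (by positivity), ← ENNReal.ofReal_mul (by positivity)]
      apply ENNReal.ofReal_le_ofReal
      have e1 : (eucZ i / 2) ^ (n : ℝ) ≤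
          eucZ (i - A1.mulVec j0) ^ α1 * eucZ (i - A2.mulVec j0) ^ α2 := by
        rw [← hsum, Real.rpow_add (by positivity)]
        have w1 := eucZ_nonneg (i - A1.mulVec j0)
        gcongr
      calc _ ≤ |b i| / (eucZ i / 2) ^ (n : ℝ) := by gcongr
        _ = _ := by
          rw [Real.div_rpow hi0.le (by norm_num), Real.rpow_neg hi0.le]
          field_simp
    · exfalso
      apply hi
      refine le_trans ?_ hc.1
      have : 1 ≤ 2 * Real.sqrt n * D := by nlinarith
      nlinarith
    · exact zero_le
    · exact zero_le
  refine (ENNReal.tsum_le_tsum hterm).trans ?_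
  rw [ENNReal.tsum_mul_left, ENNReal.ofReal_mul (by positivity), mul_assoc, mul_assoc]
  gcongr
  rw [← mul_assoc]
  exact hC b (eucZ j0) hj1
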